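/- arXiv:1412.1714 — 3 statements merged into one kernel-verified Lean document; each statement's English description precedes it below -/
import Mathlib

section
/- Let (X, d) be a metric space and let μ be a continuous, locally convex median on X. Let a and b be distinct points of X. Then there exists a wall W = {H⁺(W), H⁻(W)} in X strongly separating a from b, i.e. such that a ∈ X \ closure(H⁻(W)) and b ∈ X \ closure(H⁺(W)). -/
/-- A median on a set `X` (the median algebra axioms). -/
def IsMedianAlgebra {X : Type*} (m : X → X → X → X) : Prop :=
  (∀ a b c, m a b c = m b a c) ∧
  (∀ a b c, m a b c = m b c a) ∧
  (∀ a b, m a a b = a) ∧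
  (∀ a b c d e, m a b (m c d e) = m (m a b c) (m a b d) e)
/-- The interval `I(a, b) = {c | μ(a,b,c) = c}`. -/
def mInterval {X : Type*} (m : X → X → X → X) (a b : X) : Set X := {c | m a b c = c}
/-- A subset `C` is convex if `I(a,b) ⊆ C` for all `a, b ∈ C`. -/
def MConvex {X : Type*} (m : X → X → X → X) (C : Set X) : Prop :=
  ∀ a ∈ C, ∀ b ∈ C, mInterval m a b ⊆ C
/-- A wall: a pair of non-empty convex disjoint subsets covering `X`. -/
def IsWall {X : Type*} (m : X → X → X → X) (Hp Hm : Set X) : Prop :=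
  Hp.Nonempty ∧ Hm.Nonempty ∧ MConvex m Hp ∧ MConvex m Hm ∧
  Disjoint Hp Hm ∧ Hp ∪ Hm = Set.univ

/-!
Around a base point `w`, the operation `fun a b => m w a b` is a meet-semilattice in which `w` lies
between `a` and `b` exactly when their meet is `w`. Computing in these semilattices yields two
facts: the join of a point with a convex set is convex, and triangles satisfy the Pasch axiom. If
`C` is maximal among the convex sets disjoint from a convex set `B`, then the join of `C` with any
point outside `C` meets `B`. So if `w ∈ C` lay between `x, y ∉ C`, there would be points of `B`
between `x` and `C` and between `y` and `C`, and applying Pasch twice would produce a common point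
of `B` and `C`. Hence `C` and its complement form a wall. Disjoint convex neighbourhoods of the two
points can be separated in this way.
-/

open Set Topology

section MedianAlgebra

variable {X : Type*} {m : X → X → X → X}

theorem mem_mInterval {a b c : X} : c ∈ mInterval m a b ↔ m a b c = c := Iff.rfl

namespace IsMedianAlgebra

section Identities

theorem swap_left (hm : IsMedianAlgebra m) (a b c : X) : m a b c = m b a c := hm.1 a b c

theorem rotate (hm : IsMedianAlgebra m) (a b c : X) : m a b c = m b c a := hm.2.1 a b c

theorem swap_right (hm : IsMedianAlgebra m) (a b c : X) : m a b c = m a c b := by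
  rw [hm.swap_left, hm.rotate]

theorem self_left (hm : IsMedianAlgebra m) (a b : X) : m a a b = a := hm.2.2.1 a b

theorem self_outer (hm : IsMedianAlgebra m) (a b : X) : m a b a = a := by
  rw [hm.swap_right, hm.self_left]

theorem self_right (hm : IsMedianAlgebra m) (a b : X) : m a b b = b := by
  rw [hm.rotate, hm.self_left]

theorem distrib (hm : IsMedianAlgebra m) (a b c d e : X) :
    m a b (m c d e) = m (m a b c) (m a b d) e := hm.2.2.2 a b c d e

theorem idem (hm : IsMedianAlgebra m) (a b c : X) : m a b (m a b c) = m a b c := by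
  rw [hm.distrib, hm.self_outer, hm.self_right]

theorem assoc (hm : IsMedianAlgebra m) (w a b c : X) : m w a (m w b c) = m w (m w a b) c := by
  rw [hm.distrib, hm.self_outer]

theorem distrib_all (hm : IsMedianAlgebra m) (a b c d e : X) :
    m a b (m c d e) = m (m a b c) (m a b d) (m a b e) :=
  calc m a b (m c d e) = m a b (m a b (m c d e)) := (hm.idem _ _ _).symm
    _ = m a b (m e (m a b c) (m a b d)) := by rw [hm.distrib a b c, hm.rotate e]
    _ = m (m a b e) (m a b (m a b c)) (m a b d) := hm.distrib _ _ _ _ _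
    _ = m (m a b c) (m a b d) (m a b e) := by rw [hm.idem, hm.rotate]

end Identities

section Intervals

variable {a b c p q w x z : X}

theorem mInterval_comm (hm : IsMedianAlgebra m) (a b : X) : mInterval m a b = mInterval m b a := by
  ext c
  rw [mem_mInterval, mem_mInterval, hm.swap_left]

theorem left_mem_mInterval (hm : IsMedianAlgebra m) (a b : X) : a ∈ mInterval m a b :=
  hm.self_outer a b

theorem right_mem_mInterval (hm : IsMedianAlgebra m) (a b : X) : b ∈ mInterval m a b :=
  hm.self_right a b

theorem med_mem_mInterval (hm : IsMedianAlgebra m) (a b c : X) : m a b c ∈ mInterval m a b :=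
  hm.idem a b c

theorem mem_mInterval_of_mem_of_mem (hm : IsMedianAlgebra m)
    (hw : w ∈ mInterval m a b) (hp : p ∈ mInterval m w a) : w ∈ mInterval m p b := by
  rw [mem_mInterval] at *
  calc m p b w = m w (m w p a) b := by rw [hm.swap_right w p a, hp, hm.rotate w]
    _ = m w p (m a b w) := by rw [← hm.assoc, hm.rotate w a b]
    _ = w := by rw [hw, hm.self_outer]

-- `m w x c` is the gate of `w` in `I(x, c)`.
theorem med_mem_mInterval_of_mem (hm : IsMedianAlgebra m) (hz : z ∈ mInterval m x c) (w : X) :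
    m w x c ∈ mInterval m w z := by
  rw [mem_mInterval] at *
  calc m w z (m w x c) = m (m x c z) (m x c w) w := by rw [hz, hm.rotate w z, hm.rotate w x]
    _ = m x c (m z w w) := (hm.distrib _ _ _ _ _).symm
    _ = m w x c := by rw [hm.self_right, hm.rotate w]

theorem pasch (hm : IsMedianAlgebra m) (hp : p ∈ mInterval m x a) (hq : q ∈ mInterval m x b) :
    (mInterval m p b ∩ mInterval m a q).Nonempty := by
  rw [mem_mInterval] at hp hq
  have meet_le : m p a q = m p a (m p b q) :=
    calc m p a q = m p a (m x b q) := by rw [hq]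
      _ = m (m p a x) (m p a b) (m p a q) := hm.distrib_all _ _ _ _ _
      _ = m (m p a p) (m p a b) (m p a q) := by
        rw [hm.self_outer, hm.rotate p, hm.swap_left a, hp]
      _ = m p a (m p b q) := (hm.distrib_all _ _ _ _ _).symm
  refine ⟨m a q p, ?_, hm.med_mem_mInterval a q p⟩
  rw [mem_mInterval, ← hm.rotate p a q]
  calc m p b (m p a q) = m p (m p b q) a := by rw [hm.swap_right p a, hm.assoc]
    _ = m p a q := by rw [hm.swap_right, ← meet_le]

end Intervals

end IsMedianAlgebra

/-- The join of a point `x` with a set `C` in a median algebra: the union of the intervals from `x`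
to the points of `C`. -/
def mJoin (m : X → X → X → X) (x : X) (C : Set X) : Set X := ⋃ c ∈ C, mInterval m x c

theorem mem_mJoin {x z : X} {C : Set X} : z ∈ mJoin m x C ↔ ∃ c ∈ C, z ∈ mInterval m x c := by
  simp only [mJoin, mem_iUnion, exists_prop]

namespace IsMedianAlgebra

variable {x : X} {B C : Set X}

theorem subset_mJoin (hm : IsMedianAlgebra m) (x : X) (C : Set X) : C ⊆ mJoin m x C :=
  fun c hc => mem_mJoin.2 ⟨c, hc, hm.right_mem_mInterval x c⟩

theorem mem_mJoin_self (hm : IsMedianAlgebra m) (x : X) (hC : C.Nonempty) : x ∈ mJoin m x C :=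
  let ⟨c, hc⟩ := hC
  mem_mJoin.2 ⟨c, hc, hm.left_mem_mInterval x c⟩

theorem mConvex_mJoin (hm : IsMedianAlgebra m) (x : X) (hC : MConvex m C) :
    MConvex m (mJoin m x C) := by
  intro z₁ hz₁ z₂ hz₂ w hw
  obtain ⟨c₁, hc₁, hz₁⟩ := mem_mJoin.1 hz₁
  obtain ⟨c₂, hc₂, hz₂⟩ := mem_mJoin.1 hz₂
  refine mem_mJoin.2 ⟨m c₁ c₂ w, hC c₁ hc₁ c₂ hc₂ (hm.med_mem_mInterval c₁ c₂ w), ?_⟩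
  have hw₁ : w ∈ mInterval m (m w x c₁) z₂ :=
    hm.mem_mInterval_of_mem_of_mem hw (hm.med_mem_mInterval_of_mem hz₁ w)
  have hw₂ : w ∈ mInterval m (m w x c₂) (m w x c₁) :=
    hm.mem_mInterval_of_mem_of_mem (hm.mInterval_comm _ _ ▸ hw₁)
      (hm.med_mem_mInterval_of_mem hz₂ w)
  rw [mem_mInterval] at hw₂ ⊢
  calc m x (m c₁ c₂ w) w = m w x (m c₂ c₁ w) := by rw [← hm.rotate w x, hm.swap_left c₁]
    _ = m (m w x c₂) (m w x c₁) w := hm.distrib _ _ _ _ _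
    _ = w := hw₂

theorem mJoin_inter_nonempty_of_maximal (hm : IsMedianAlgebra m)
    (hC : Maximal (fun C => MConvex m C ∧ Disjoint C B) C) (hne : C.Nonempty) (hx : x ∉ C) :
    (mJoin m x C ∩ B).Nonempty := by
  rw [← not_disjoint_iff_nonempty_inter]
  intro hdisj
  have hle : mJoin m x C ⊆ C :=
    hC.le_of_ge ⟨hm.mConvex_mJoin x hC.prop.1, hdisj⟩ (hm.subset_mJoin x C)
  exact hx (hle (hm.mem_mJoin_self x hne))

theorem mConvex_compl_of_maximal (hm : IsMedianAlgebra m) (hB : MConvex m B)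
    (hC : Maximal (fun C => MConvex m C ∧ Disjoint C B) C) : MConvex m Cᶜ := by
  intro x hx y hy w hw hwC
  obtain ⟨d, hd, hdB⟩ := hm.mJoin_inter_nonempty_of_maximal hC ⟨w, hwC⟩ hx
  obtain ⟨e, he, heB⟩ := hm.mJoin_inter_nonempty_of_maximal hC ⟨w, hwC⟩ hy
  obtain ⟨c, hcC, hd⟩ := mem_mJoin.1 hd
  obtain ⟨c', hcC', he⟩ := mem_mJoin.1 he
  obtain ⟨u, hu, huC⟩ := hm.pasch hd hw
  obtain ⟨v, hvC, hvB⟩ := hm.pasch (hm.mInterval_comm d y ▸ hu) he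
  exact disjoint_left.1 hC.prop.2 (hC.prop.1 u (hC.prop.1 c hcC w hwC huC) c' hcC' hvC)
    (hB d hdB e heB hvB)

end IsMedianAlgebra

namespace MConvex

variable {A B : Set X}

theorem sUnion_of_directedOn {S : Set (Set X)} (hS : DirectedOn (· ⊆ ·) S)
    (hconv : ∀ C ∈ S, MConvex m C) : MConvex m (⋃₀ S) := by
  rintro x ⟨C, hC, hxC⟩ y ⟨D, hD, hyD⟩ z hz
  obtain ⟨E, hE, hCE, hDE⟩ := hS C hC D hD
  exact ⟨E, hE, hconv E hE x (hCE hxC) y (hDE hyD) hz⟩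

theorem exists_maximal_disjoint (hA : MConvex m A) (hAB : Disjoint A B) :
    ∃ C, A ⊆ C ∧ Maximal (fun C => MConvex m C ∧ Disjoint C B) C := by
  refine zorn_subset_nonempty {C | MConvex m C ∧ Disjoint C B} ?_ A ⟨hA, hAB⟩
  intro S hS hchain _
  exact ⟨⋃₀ S, ⟨sUnion_of_directedOn hchain.directedOn fun C hC => (hS hC).1,
    disjoint_sUnion_left.2 fun C hC => (hS hC).2⟩, fun C => subset_sUnion_of_mem⟩

theorem exists_isWall_of_disjoint (hm : IsMedianAlgebra m) (hA : MConvex m A) (hB : MConvex m B)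
    (hAne : A.Nonempty) (hBne : B.Nonempty) (hAB : Disjoint A B) :
    ∃ Hp Hm : Set X, IsWall m Hp Hm ∧ A ⊆ Hp ∧ B ⊆ Hm := by
  obtain ⟨C, hAC, hC⟩ := hA.exists_maximal_disjoint hAB
  have hBC : B ⊆ Cᶜ := hC.prop.2.subset_compl_left
  exact ⟨C, Cᶜ, ⟨hAne.mono hAC, hBne.mono hBC, hC.prop.1, hm.mConvex_compl_of_maximal hB hC,
    disjoint_compl_right, union_compl_self C⟩, hAC, hBC⟩

end MConvex

end MedianAlgebra

theorem wall_strongly_separating_points_general {X : Type*} [TopologicalSpace X] [T2Space X]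
    (m : X → X → X → X) (hmed : IsMedianAlgebra m)
    (hlc : ∀ x : X, ∀ U ∈ 𝓝 x, ∃ V ∈ 𝓝 x, V ⊆ U ∧ MConvex m V)
    (a b : X) (hab : a ≠ b) :
    ∃ Hp Hm : Set X, IsWall m Hp Hm ∧ a ∉ closure Hm ∧ b ∉ closure Hp := by
  obtain ⟨U, V, hU, hV, hUV⟩ := t2_separation_nhds hab
  obtain ⟨A, hA, hAU, hAconv⟩ := hlc a U hU
  obtain ⟨B, hB, hBV, hBconv⟩ := hlc b V hV
  obtain ⟨Hp, Hm, hwall, hAp, hBm⟩ := hAconv.exists_isWall_of_disjoint hmed hBconv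
    ⟨a, mem_of_mem_nhds hA⟩ ⟨b, mem_of_mem_nhds hB⟩ (hUV.mono hAU hBV)
  have hdisj : Disjoint Hp Hm := hwall.2.2.2.2.1
  refine ⟨Hp, Hm, hwall, fun ha => ?_, fun hb => ?_⟩
  · exact not_disjoint_iff_nonempty_inter.2 (mem_closure_iff_nhds.1 ha A hA)
      (hdisj.mono_left hAp)
  · exact not_disjoint_iff_nonempty_inter.2 (mem_closure_iff_nhds.1 hb B hB)
      (hdisj.symm.mono_left hBm)

/-- Two distinct points of a metric space with a continuous, locally convex median
are strongly separated by a wall. -/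
theorem wall_strongly_separating_points {X : Type*} [MetricSpace X]
    (m : X → X → X → X) (hmed : IsMedianAlgebra m)
    (hcont : Continuous fun p : X × X × X => m p.1 p.2.1 p.2.2)
    (hlc : ∀ x : X, ∀ U ∈ nhds x, ∃ V ∈ nhds x, V ⊆ U ∧ MConvex m V)
    (a b : X) (hab : a ≠ b) :
    ∃ Hp Hm : Set X, IsWall m Hp Hm ∧ a ∉ closure Hm ∧ b ∉ closure Hp :=
  wall_strongly_separating_points_general m hmed hlc a b hab
end

section
/- Let X and Y be Hausdorff topological spaces and let f : X → Y be a continuous injective map. Then the separation dimension of X is at most the separation dimension of Y. -/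
universe u

/-- `SepDimLE n X` means the separation dimension of `X` is at most `n - 1`
(so `SepDimLE 0 X` means `X = ∅`, i.e. dimension `≤ -1`). -/
def SepDimLE : (n : ℕ) → (X : Type u) → [TopologicalSpace X] → Prop
  | 0, X, _ => IsEmpty X
  | n+1, X, _ => ∀ x y : X, x ≠ y → ∃ A B : Set X, IsClosed A ∧ IsClosed B ∧
      x ∉ B ∧ y ∉ A ∧ A ∪ B = Set.univ ∧ SepDimLE n ↥(A ∩ B)

universe v

/-- A continuous injection between Hausdorff spaces does not increase the
separation dimension. -/
theorem sepDim_le_of_continuous_injective {X : Type u} {Y : Type v}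
    [TopologicalSpace X] [TopologicalSpace Y] [T2Space X] [T2Space Y]
    (f : X → Y) (hcont : Continuous f) (hinj : Function.Injective f) :
    ∀ n : ℕ, SepDimLE n Y → SepDimLE n X := by
  intro n hY
  induction n generalizing X Y with
  | zero =>
    have : IsEmpty Y := hY
    exact Function.isEmpty f
  | succ n ih =>
    intro x y hxy
    obtain ⟨A, B, hA, hB, hxB, hyA, hAB, hdim⟩ := hY (f x) (f y) (hinj.ne hxy)
    have hcover : f ⁻¹' A ∪ f ⁻¹' B = Set.univ := by
      rw [← Set.preimage_union, hAB, Set.preimage_univ]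
    have hdim_preimage : SepDimLE n ↥(f ⁻¹' A ∩ f ⁻¹' B) :=
      ih ((A ∩ B).restrictPreimage f) hcont.restrictPreimage (hinj.restrictPreimage _) hdim
    exact ⟨f ⁻¹' A, f ⁻¹' B, hA.preimage hcont, hB.preimage hcont, hxB, hyA, hcover,
      hdim_preimage⟩
end

section
/- There exists a map μ : (ℝ²)³ → ℝ² which is a median on ℝ² (it satisfies the median algebra axioms) and which is continuous with respect to the L¹ metric on ℝ², but which is not Lipschitz: for no constant k ≥ 0 does d(μ(a,b,c), μ(a',b',c')) ≤ k(d(a,a') + d(b,b') + d(c,c')) hold for all a, b, c, a', b', c' ∈ ℝ². (Such a median is obtained as the image of the standard coordinatewise L¹ median under a non-Lipschitz diffeomorphism of ℝ².) -/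
/-!
Pull back the coordinatewise median of `ℝ × ℝ` along the homeomorphism `(x, y) ↦ (x, y - f x)`,
with `f` continuous. With second and third arguments fixed at the points `(s, f s)` and `(t, f t)`,
which the shear straightens to the axis `ℝ × {0}`, the new median sends the first arguments
`(s, 0)` and `(t, 0)` to `(s, f s)` and `(t, f t)`. A Lipschitz bound on it is therefore a Lipschitz
bound on `f`, which fails for `f x = x ^ 2`.
-/

namespace IsMedianAlgebra

variable {X : Type*} {μ : X → X → X → X}

lemma apply_self_left (hμ : IsMedianAlgebra μ) (a b : X) : μ a a b = a :=
  hμ.2.2.1 a b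

lemma apply_self_right (hμ : IsMedianAlgebra μ) (a b : X) : μ a b b = b :=
  (hμ.2.1 a b b).trans (hμ.apply_self_left b a)

lemma apply_self_outer (hμ : IsMedianAlgebra μ) (a b : X) : μ a b a = a :=
  (hμ.1 a b a).trans (hμ.apply_self_right b a)

end IsMedianAlgebra

section LatticeMedian

/-- The median operation of a lattice. In a distributive lattice it agrees with its order dual
and satisfies the median axioms; in a linear order it is the middle one of three elements. -/
def latticeMedian {L : Type*} [Lattice L] (a b c : L) : L :=
  (a ⊓ b) ⊔ (b ⊓ c) ⊔ (c ⊓ a)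

lemma map_latticeMedian {F L M : Type*} [Lattice L] [Lattice M] [FunLike F L M]
    [LatticeHomClass F L M] (φ : F) (a b c : L) :
    φ (latticeMedian a b c) = latticeMedian (φ a) (φ b) (φ c) := by
  simp only [latticeMedian, map_sup, map_inf]

lemma continuous_latticeMedian {L : Type*} [Lattice L] [TopologicalSpace L]
    [TopologicalLattice L] : Continuous fun p : L × L × L => latticeMedian p.1 p.2.1 p.2.2 := by
  unfold latticeMedian
  fun_prop

section Lattice

variable {L : Type*} [Lattice L]

lemma latticeMedian_comm (a b c : L) : latticeMedian a b c = latticeMedian b a c := by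
  rw [latticeMedian, latticeMedian, inf_comm b a, inf_comm a c, inf_comm c b, sup_right_comm]

lemma latticeMedian_rotate (a b c : L) : latticeMedian a b c = latticeMedian b c a := by
  rw [latticeMedian, latticeMedian, sup_assoc, sup_comm]

lemma latticeMedian_self_left (a b : L) : latticeMedian a a b = a := by
  rw [latticeMedian, inf_idem, sup_inf_self, inf_comm, sup_inf_self]

lemma inf_le_latticeMedian (a b c : L) : a ⊓ b ≤ latticeMedian a b c :=
  le_sup_left.trans le_sup_left

lemma latticeMedian_le_sup (a b c : L) : latticeMedian a b c ≤ a ⊔ b :=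
  sup_le (sup_le inf_le_sup (inf_le_left.trans le_sup_right)) (inf_le_right.trans le_sup_left)

end Lattice

variable {L : Type*} [DistribLattice L]

lemma latticeMedian_eq_sup_inf (a b c : L) : latticeMedian a b c = (a ⊓ b) ⊔ ((a ⊔ b) ⊓ c) := by
  rw [latticeMedian, inf_sup_right, inf_comm c a, sup_assoc, sup_comm (b ⊓ c)]

/-- The gate map `x ↦ latticeMedian a b x` onto the interval between `a` and `b`, as a lattice
endomorphism. -/
def latticeMedianHom (a b : L) : LatticeHom L L where
  toFun := latticeMedian a b
  map_sup' x y := by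
    rw [latticeMedian_eq_sup_inf, inf_sup_left, sup_sup_distrib_left, ← latticeMedian_eq_sup_inf,
      ← latticeMedian_eq_sup_inf]
  map_inf' x y := by
    rw [latticeMedian_eq_sup_inf, inf_inf_distrib_left, sup_inf_left, ← latticeMedian_eq_sup_inf,
      ← latticeMedian_eq_sup_inf]

lemma latticeMedian_distrib (a b c d e : L) :
    latticeMedian a b (latticeMedian c d e) =
      latticeMedian (latticeMedian a b c) (latticeMedian a b d) (latticeMedian a b e) :=
  map_latticeMedian (latticeMedianHom a b) c d e

lemma latticeMedian_latticeMedian_of_le {a b u v : L} (hinf : a ⊓ b ≤ u ⊓ v) (hsup : u ⊔ v ≤ a ⊔ b)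
    (x : L) : latticeMedian u v (latticeMedian a b x) = latticeMedian u v x := by
  have habsorb : (u ⊔ v) ⊓ (a ⊓ b) ≤ u ⊓ v := inf_le_right.trans hinf
  simp only [latticeMedian_eq_sup_inf]
  rw [inf_sup_left, ← sup_assoc, sup_eq_left.2 habsorb, ← inf_assoc, inf_eq_left.2 hsup]

theorem isMedianAlgebra_latticeMedian : IsMedianAlgebra (latticeMedian (L := L)) := by
  refine ⟨latticeMedian_comm, latticeMedian_rotate, latticeMedian_self_left, fun a b c d e => ?_⟩
  rw [latticeMedian_distrib]
  exact latticeMedian_latticeMedian_of_le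
    (le_inf (inf_le_latticeMedian a b c) (inf_le_latticeMedian a b d))
    (sup_le (latticeMedian_le_sup a b c) (latticeMedian_le_sup a b d)) e

end LatticeMedian

section Prod

variable {X Y : Type*}

/-- The coordinatewise operation on `X × Y` induced by ternary operations on the factors; it is the
product median when `μ` and `ν` are medians. -/
def prodMedian (μ : X → X → X → X) (ν : Y → Y → Y → Y) (a b c : X × Y) : X × Y :=
  (μ a.1 b.1 c.1, ν a.2 b.2 c.2)

variable {μ : X → X → X → X} {ν : Y → Y → Y → Y}

theorem IsMedianAlgebra.prod (hμ : IsMedianAlgebra μ) (hν : IsMedianAlgebra ν) :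
    IsMedianAlgebra (prodMedian μ ν) := by
  obtain ⟨μcomm, μrotate, μidem, μdistrib⟩ := hμ
  obtain ⟨νcomm, νrotate, νidem, νdistrib⟩ := hν
  exact ⟨fun _ _ _ => Prod.ext (μcomm ..) (νcomm ..),
    fun _ _ _ => Prod.ext (μrotate ..) (νrotate ..),
    fun _ _ => Prod.ext (μidem ..) (νidem ..),
    fun _ _ _ _ _ => Prod.ext (μdistrib ..) (νdistrib ..)⟩

lemma continuous_prodMedian [TopologicalSpace X] [TopologicalSpace Y]
    (hμ : Continuous fun p : X × X × X => μ p.1 p.2.1 p.2.2)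
    (hν : Continuous fun p : Y × Y × Y => ν p.1 p.2.1 p.2.2) :
    Continuous fun p : (X × Y) × (X × Y) × (X × Y) => prodMedian μ ν p.1 p.2.1 p.2.2 :=
  (hμ.comp (by fun_prop : Continuous fun p : (X × Y) × (X × Y) × (X × Y) =>
      (p.1.1, p.2.1.1, p.2.2.1))).prodMk
    (hν.comp (by fun_prop : Continuous fun p : (X × Y) × (X × Y) × (X × Y) =>
      (p.1.2, p.2.1.2, p.2.2.2)))

end Prod

section Transport

variable {X Y : Type*} {m : Y → Y → Y → Y} {e : X ≃ Y}

/-- The pullback of a ternary operation along a bijection; it is a median when `m` is. In terms of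
images, it is the image of `m` under `e.symm`. -/
def transportMedian (e : X ≃ Y) (m : Y → Y → Y → Y) (a b c : X) : X :=
  e.symm (m (e a) (e b) (e c))

theorem IsMedianAlgebra.transport (hm : IsMedianAlgebra m) (e : X ≃ Y) :
    IsMedianAlgebra (transportMedian e m) := by
  obtain ⟨comm, rotate, idem, distrib⟩ := hm
  refine ⟨fun a b c => congrArg e.symm (comm ..), fun a b c => congrArg e.symm (rotate ..),
    fun a b => ?_, fun a b c d x => ?_⟩
  · rw [transportMedian, idem, e.symm_apply_apply]
  · simp only [transportMedian, e.apply_symm_apply]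
    rw [distrib]

lemma continuous_transportMedian [TopologicalSpace X] [TopologicalSpace Y]
    (hm : Continuous fun p : Y × Y × Y => m p.1 p.2.1 p.2.2)
    (he : Continuous e) (he' : Continuous e.symm) :
    Continuous fun p : X × X × X => transportMedian e m p.1 p.2.1 p.2.2 :=
  he'.comp (hm.comp (by fun_prop : Continuous fun p : X × X × X => (e p.1, e p.2.1, e p.2.2)))

end Transport

section Lipschitz

/-- The Lipschitz condition on a median of a metric space, with respect to the sum of the distances
between the three arguments. The median axioms are not part of it. -/
def IsLipschitzMedian {X : Type*} [PseudoMetricSpace X] (m : X → X → X → X) : Prop :=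
  ∃ k : ℝ, 0 ≤ k ∧ ∀ a b c a' b' c',
    dist (m a b c) (m a' b' c') ≤ k * (dist a a' + dist b b' + dist c c')

theorem IsLipschitzMedian.of_transportMedian {X Y : Type*} [PseudoMetricSpace X]
    [PseudoMetricSpace Y] {m : Y → Y → Y → Y} {e : X ≃ Y} {K K' : NNReal}
    (hm : IsLipschitzMedian (transportMedian e m))
    (he : LipschitzWith K e) (he' : LipschitzWith K' e.symm) : IsLipschitzMedian m := by
  obtain ⟨k, hk, hbound⟩ := hm
  refine ⟨K * (k * K'), by positivity, fun a b c a' b' c' => ?_⟩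
  have apply_transport (a b c : Y) :
      m a b c = e (transportMedian e m (e.symm a) (e.symm b) (e.symm c)) := by
    simp only [transportMedian, e.apply_symm_apply]
  calc dist (m a b c) (m a' b' c')
    _ ≤ K * dist (transportMedian e m (e.symm a) (e.symm b) (e.symm c))
          (transportMedian e m (e.symm a') (e.symm b') (e.symm c')) := by
      rw [apply_transport a, apply_transport a']
      exact he.dist_le_mul _ _
    _ ≤ K * (k * (dist (e.symm a) (e.symm a') + dist (e.symm b) (e.symm b') +
          dist (e.symm c) (e.symm c'))) := by
      gcongr
      exact hbound ..
    _ ≤ K * (k * (K' * dist a a' + K' * dist b b' + K' * dist c c')) := by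
      gcongr <;> exact he'.dist_le_mul _ _
    _ = K * (k * K') * (dist a a' + dist b b' + dist c c') := by ring

end Lipschitz

section Shear

variable {X Y : Type*} [AddGroup Y]

/-- The shear `(x, y) ↦ (x, y - f x)`, with inverse `(x, y) ↦ (x, y + f x)`. The sign is chosen so
that the inverse carries `X × {0}` to the graph of `f`. -/
def subShear (f : X → Y) : X × Y ≃ X × Y :=
  Equiv.prodShear (Equiv.refl X) fun x => Equiv.subRight (f x)

lemma continuous_subShear [TopologicalSpace X] [TopologicalSpace Y] [ContinuousSub Y]
    {f : X → Y} (hf : Continuous f) : Continuous (subShear f) :=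
  continuous_fst.prodMk (continuous_snd.sub (hf.comp continuous_fst))

lemma continuous_subShear_symm [TopologicalSpace X] [TopologicalSpace Y] [ContinuousAdd Y]
    {f : X → Y} (hf : Continuous f) : Continuous (subShear f).symm :=
  continuous_fst.prodMk (continuous_snd.add (hf.comp continuous_fst))

variable {μ : X → X → X → X} {ν : Y → Y → Y → Y}

lemma transportMedian_subShear_apply_graph (hν : IsMedianAlgebra ν) (f : X → Y) (r s t : X) :
    transportMedian (subShear f) (prodMedian μ ν) (r, 0) (s, f s) (t, f t) =
      (μ r s t, f (μ r s t)) := by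
  simp [transportMedian, prodMedian, subShear, hν.apply_self_right]

theorem IsLipschitzMedian.exists_lipschitzWith_of_subShear [PseudoMetricSpace X]
    [PseudoMetricSpace Y] (hμ : IsMedianAlgebra μ) (hν : IsMedianAlgebra ν) {f : X → Y}
    (h : IsLipschitzMedian (transportMedian (subShear f) (prodMedian μ ν))) :
    ∃ K, LipschitzWith K f := by
  obtain ⟨k, hk, hbound⟩ := h
  refine ⟨⟨k, hk⟩, LipschitzWith.of_dist_le_mul fun s t => ?_⟩
  have hst := hbound (s, 0) (s, f s) (t, f t) (t, 0) (s, f s) (t, f t)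
  rw [transportMedian_subShear_apply_graph hν, transportMedian_subShear_apply_graph hν,
    hμ.apply_self_left, hμ.apply_self_outer] at hst
  calc dist (f s) (f t)
    _ ≤ dist (s, f s) (t, f t) := le_max_right _ _
    _ ≤ k * dist s t := by simpa [Prod.dist_eq] using hst

end Shear

section PiLp

variable (p : ENNReal) (α : Fin 2 → Type*)

/-- The homeomorphism from a two-factor `ℓᵖ` product to the binary product, which carries the
sup metric. -/
def piLpFinTwoHomeomorph [∀ i, TopologicalSpace (α i)] : PiLp p α ≃ₜ α 0 × α 1 :=
  (PiLp.homeomorph p α).trans (Homeomorph.piFinTwo α)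

variable [Fact (1 ≤ p)] [∀ i, PseudoEMetricSpace (α i)]

lemma lipschitzWith_piLpFinTwoHomeomorph : LipschitzWith 1 (piLpFinTwoHomeomorph p α) :=
  (IsometryEquiv.piFinTwo α).isometry.lipschitzWith_iff 1 |>.2 (PiLp.lipschitzWith_ofLp p α)

lemma exists_lipschitzWith_piLpFinTwoHomeomorph_symm :
    ∃ K, LipschitzWith K (piLpFinTwoHomeomorph p α).symm :=
  ⟨_, (PiLp.lipschitzWith_toLp p α).comp (IsometryEquiv.piFinTwo α).symm.isometry.lipschitz⟩

end PiLp

lemma not_exists_lipschitzWith_sq : ¬ ∃ K, LipschitzWith K fun x : ℝ => x ^ 2 := by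
  rintro ⟨K, hK⟩
  have hbound : ((K : ℝ) + 1) ^ 2 ≤ K * (K + 1) := by
    have h := hK.dist_le_mul (K + 1) 0
    rwa [Real.dist_eq, Real.dist_eq, zero_pow two_ne_zero, sub_zero, sub_zero, abs_of_nonneg,
      abs_of_nonneg] at h <;> positivity
  nlinarith [K.coe_nonneg]

/-- There is a continuous median on `(ℝ², L¹)` which is not Lipschitz. -/
theorem exists_continuous_not_lipschitz_median :
    ∃ m : (PiLp 1 fun _ : Fin 2 => ℝ) → (PiLp 1 fun _ : Fin 2 => ℝ) →
        (PiLp 1 fun _ : Fin 2 => ℝ) → (PiLp 1 fun _ : Fin 2 => ℝ),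
      IsMedianAlgebra m ∧
      Continuous (fun p : (PiLp 1 fun _ : Fin 2 => ℝ) × (PiLp 1 fun _ : Fin 2 => ℝ) ×
        (PiLp 1 fun _ : Fin 2 => ℝ) => m p.1 p.2.1 p.2.2) ∧
      ¬ ∃ k : ℝ, 0 ≤ k ∧ ∀ a b c a' b' c',
        dist (m a b c) (m a' b' c') ≤ k * (dist a a' + dist b b' + dist c c') := by
  let plane := piLpFinTwoHomeomorph 1 fun _ => ℝ
  let shear : ℝ × ℝ ≃ ℝ × ℝ := subShear (· ^ 2)
  have hsq : Continuous fun x : ℝ => x ^ 2 := continuous_pow 2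
  have hmed : IsMedianAlgebra (latticeMedian (L := ℝ)) := isMedianAlgebra_latticeMedian
  have hcont := continuous_latticeMedian (L := ℝ)
  refine ⟨transportMedian plane.toEquiv (transportMedian shear
    (prodMedian latticeMedian latticeMedian)), ?_, ?_, fun hlip => ?_⟩
  · exact ((hmed.prod hmed).transport shear).transport plane.toEquiv
  · have hshear := continuous_transportMedian (continuous_prodMedian hcont hcont)
      (continuous_subShear hsq) (continuous_subShear_symm hsq)
    exact continuous_transportMedian hshear plane.continuous plane.symm.continuous
  · obtain ⟨K, hK⟩ := exists_lipschitzWith_piLpFinTwoHomeomorph_symm 1 fun _ => ℝ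
    have hsheared := IsLipschitzMedian.of_transportMedian hlip
      (lipschitzWith_piLpFinTwoHomeomorph 1 fun _ => ℝ) hK
    exact not_exists_lipschitzWith_sq (hsheared.exists_lipschitzWith_of_subShear hmed hmed)
end
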